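/- arXiv:math/0009090 — 3 statements merged into one kernel-verified Lean document; each statement's English description precedes it below -/
import Mathlib

section
/- Define f_{2n+1} = 5·2^n − 2 for n ≥ 0 and f_{2n} = 7·2^{n−1} − 2 for n ≥ 1. Let x be the infinite word over {0,1,2} with x[1] = x[2] = 2, x[p] = 0 exactly when p = f_i for some i ≥ 1, and x[p] = 1 for all other positions p. Then x is weakly self-avoiding. -/
/-- The factor `x[a..b]` of a 1-indexed infinite word `x`. -/
def extractInf {α : Type*} (x : ℕ → α) (a b : ℕ) : List α :=
  (List.range (b + 1 - a)).map (fun k => x (a + k))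

/-- An infinite word `x` is weakly self-avoiding if for all `i, j` with `1 ≤ i < j`,
the word `x[i..2i]` is not a factor of `x[j..2j]`. -/
def WeaklySelfAvoidingInf {α : Type*} (x : ℕ → α) : Prop :=
  ∀ i j : ℕ, 1 ≤ i → i < j → ¬ (extractInf x i (2 * i) <:+: extractInf x j (2 * j))

/-!
The gaps `2, 3, 4, 6, 8, 12, …` between consecutive zeros of `x` increase strictly. Since
`f_{k+2} = 2 f_k + 2`, the block `x[i..2i]` with `i ≥ 3` contains two consecutive zeros, so a later
copy of it would exhibit two zeros at the same distance further to the right, where all distances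
between zeros are larger. For `i ≤ 2` the block contains `x[2]`, a letter that never occurs again.
-/

open Set

theorem exists_shift_of_extractInf_infix {α : Type*} {x : ℕ → α} {a b c e : ℕ} (hac : a < c)
    (h : extractInf x a b <:+: extractInf x c e) :
    ∃ d, 0 < d ∧ ∀ p ∈ Icc a b, x (p + d) = x p := by
  obtain ⟨s, _, hs⟩ := List.infix_iff_getElem?.1 h
  refine ⟨c + s - a, by omega, fun p ⟨hap, hpb⟩ => ?_⟩
  have hp := hs (p - a) (by simp only [extractInf, List.length_map, List.length_range]; omega)
  obtain ⟨_, hp⟩ := List.getElem?_eq_some_iff.1 hp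
  simp only [extractInf, List.getElem_map, List.getElem_range] at hp
  convert hp using 2 <;> omega

theorem add_notMem_range_of_strictMono_gaps {M : Type*} [AddCommMonoid M] [PartialOrder M]
    [IsOrderedCancelAddMonoid M] [Sub M] [OrderedSub M] {g : ℕ → M} (hg : StrictMono g)
    (hgap : StrictMono fun k => g (k + 1) - g k) {a : ℕ} {d : M} (hd : 0 < d)
    (ha : g a + d ∈ range g) : g (a + 1) + d ∉ range g := by
  rintro ⟨e, he⟩
  obtain ⟨c, hc⟩ := ha
  have hac : a < c := hg.lt_iff_lt.1 (hc ▸ lt_add_of_pos_right _ hd)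
  have hce : c < e := hg.lt_iff_lt.1 (hc ▸ he ▸ add_lt_add_left (hg a.lt_succ_self) d)
  have hgap_lt : g (a + 1) - g a < g (a + 1) - g a := calc
    g (a + 1) - g a < g (c + 1) - g c := hgap hac
    _ ≤ g e - g c := tsub_le_tsub_right (hg.monotone hce) _
    _ = g (a + 1) + d - (g a + d) := by rw [hc, he]
    _ ≤ g (a + 1) - g a := add_tsub_add_le_tsub_right
  exact hgap_lt.false

theorem exists_le_and_apply_succ_le_two_mul {g : ℕ → ℕ} {i : ℕ} (hi : ∃ a, i ≤ g a)
    (h1 : g 1 ≤ 2 * i) (hg : ∀ k, g (k + 2) ≤ 2 * g k + 2) : ∃ a, i ≤ g a ∧ g (a + 1) ≤ 2 * i := by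
  refine ⟨Nat.find hi, Nat.find_spec hi, ?_⟩
  rcases hm : Nat.find hi with _ | m
  · exact h1
  · have hlt : ¬ i ≤ g m := Nat.find_min hi (by omega)
    have hle : g (m + 1 + 1) ≤ 2 * g m + 2 := hg m
    omega

theorem weaklySelfAvoidingInf_of_strictMono_gaps {α : Type*} {x : ℕ → α} {z : α} {g : ℕ → ℕ}
    {N : ℕ} (hg : StrictMono g) (hgap : StrictMono fun k => g (k + 1) - g k) (h1 : g 1 ≤ 2 * N)
    (hdouble : ∀ k, g (k + 2) ≤ 2 * g k + 2) (hz : ∀ p, N ≤ p → (x p = z ↔ p ∈ range g))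
    (hlast : ∀ i, 1 ≤ i → i < N → ∃ p ∈ Icc i (2 * i), ∀ q, p < q → x q ≠ x p) :
    WeaklySelfAvoidingInf x := by
  intro i j hi hij hinf
  obtain ⟨d, hd, hshift⟩ := exists_shift_of_extractInf_infix hij hinf
  obtain hiN | hNi := lt_or_ge i N
  · obtain ⟨p, hp, hne⟩ := hlast i hi hiN
    exact hne (p + d) (by omega) (hshift p hp)
  obtain ⟨a, hia, hai⟩ :=
    exists_le_and_apply_succ_le_two_mul ⟨i, hg.le_apply⟩ (h1.trans (by omega)) hdouble
  have hlt : g a < g (a + 1) := hg a.lt_succ_self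
  have shift_mem : ∀ k, g k ∈ Icc i (2 * i) → g k + d ∈ range g := fun k hk => by
    have hNk : N ≤ g k := hNi.trans hk.1
    rw [← hz _ (by omega), hshift _ hk, hz _ hNk]
    exact mem_range_self k
  exact add_notMem_range_of_strictMono_gaps hg hgap hd (shift_mem a ⟨hia, by omega⟩)
    (shift_mem (a + 1) ⟨by omega, hai⟩)

theorem strictMono_of_add_two_eq {β : Type*} [Preorder β] {u : ℕ → β} {φ : β → β}
    (hφ : StrictMono φ) (hu : ∀ k, u (k + 2) = φ (u k)) (h01 : u 0 < u 1) (h12 : u 1 < u 2) :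
    StrictMono u :=
  strictMono_nat_of_lt_succ fun k => by
    induction k using Nat.twoStepInduction with
    | zero => exact h01
    | one => exact h12
    | more k ih _ => simpa only [hu] using hφ ih

/-- The positions `f₁, f₂, … = 3, 5, 8, 12, 18, 26, …` of the zeros of the word, indexed from `0`:
`zeroPos k` is `f_{k+1}`. The recurrence merges the two closed forms for odd and even indices. -/
def zeroPos : ℕ → ℕ
  | 0 => 3
  | 1 => 5
  | k + 2 => 2 * zeroPos k + 2

theorem zeroPos_add_two (k : ℕ) : zeroPos (k + 2) = 2 * zeroPos k + 2 := rfl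

theorem strictMono_zeroPos : StrictMono zeroPos :=
  strictMono_of_add_two_eq (φ := fun m => 2 * m + 2) (fun m n h => by dsimp only; omega)
    zeroPos_add_two (by decide) (by decide)

theorem strictMono_zeroPos_gaps : StrictMono fun k => zeroPos (k + 1) - zeroPos k :=
  strictMono_of_add_two_eq (φ := fun m => 2 * m) (fun m n h => by dsimp only; omega)
    (fun k => by rw [add_right_comm, zeroPos_add_two, zeroPos_add_two]; omega)
    (by decide) (by decide)

theorem zeroPos_two_mul (n : ℕ) : zeroPos (2 * n) = 5 * 2 ^ n - 2 := by
  induction n with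
  | zero => rfl
  | succ n ih =>
    have := n.one_le_two_pow
    rw [mul_add_one, zeroPos_add_two, ih, pow_succ]
    omega

theorem zeroPos_two_mul_add_one (n : ℕ) : zeroPos (2 * n + 1) = 7 * 2 ^ n - 2 := by
  induction n with
  | zero => rfl
  | succ n ih =>
    have := n.one_le_two_pow
    rw [mul_add_one, add_right_comm, zeroPos_add_two, ih, pow_succ]
    omega

theorem eq_zeroPos {f : ℕ → ℕ} (hfodd : ∀ n : ℕ, f (2 * n + 1) = 5 * 2 ^ n - 2)
    (hfeven : ∀ n : ℕ, 1 ≤ n → f (2 * n) = 7 * 2 ^ (n - 1) - 2) (k : ℕ) :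
    f (k + 1) = zeroPos k := by
  obtain ⟨n, rfl | rfl⟩ := k.even_or_odd'
  · rw [hfodd, zeroPos_two_mul]
  · rw [zeroPos_two_mul_add_one]
    exact hfeven (n + 1) n.succ_pos

theorem stmt_9_general {α : Type*} {f : ℕ → ℕ} {x : ℕ → α} {z : α}
    (hfodd : ∀ n : ℕ, f (2 * n + 1) = 5 * 2 ^ n - 2)
    (hfeven : ∀ n : ℕ, 1 ≤ n → f (2 * n) = 7 * 2 ^ (n - 1) - 2)
    (hx2 : ∀ p : ℕ, 3 ≤ p → x p ≠ x 2)
    (hxz : ∀ p : ℕ, 3 ≤ p → (x p = z ↔ ∃ i : ℕ, 1 ≤ i ∧ f i = p)) :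
    WeaklySelfAvoidingInf x := by
  have hz : ∀ p, 3 ≤ p → (x p = z ↔ p ∈ range zeroPos) := fun p hp => by
    rw [hxz p hp, ← funext (eq_zeroPos hfodd hfeven)]
    exact ⟨fun ⟨i, hi, hfi⟩ => ⟨i - 1, by simpa only [Nat.sub_add_cancel hi]⟩,
      fun ⟨k, hk⟩ => ⟨k + 1, k.succ_pos, hk⟩⟩
  exact weaklySelfAvoidingInf_of_strictMono_gaps strictMono_zeroPos strictMono_zeroPos_gaps
    (by decide) (fun k => (zeroPos_add_two k).le) hz
    fun i hi hi3 => ⟨2, ⟨by omega, by omega⟩, hx2⟩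

theorem stmt_9 (f : ℕ → ℕ) (x : ℕ → Fin 3)
    (hfodd : ∀ n : ℕ, f (2 * n + 1) = 5 * 2 ^ n - 2)
    (hfeven : ∀ n : ℕ, 1 ≤ n → f (2 * n) = 7 * 2 ^ (n - 1) - 2)
    (hx1 : x 1 = 2) (hx2 : x 2 = 2)
    (hx0 : ∀ p : ℕ, 1 ≤ p → (x p = 0 ↔ ∃ i : ℕ, 1 ≤ i ∧ f i = p))
    (hx1' : ∀ p : ℕ, 3 ≤ p → x p ≠ 0 → x p = 1) :
    WeaklySelfAvoidingInf x :=
  stmt_9_general hfodd hfeven (fun p hp => by have := hx1' p hp; grind)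
    fun p hp => hx0 p (by omega)
end

section
/- There exists an infinite word x over the binary alphabet {0,1} such that for all i, j with 2 ≤ i < j, the word x[i..2i] is not a factor of x[j..2j]. -/
/-!
Mark the positions `2, 3, 5, 8, 12, 17, …`, whose consecutive gaps are `1, 2, 3, …`. As the gaps
strictly increase, no two consecutive marks can be translated to the right onto two marks, so a
factor containing two consecutive marks never recurs further to the right. The gaps grow so slowly
that `[i, 2i]` contains two consecutive marks as soon as `2 ≤ i`.
-/

theorem length_extractInf {α : Type*} (x : ℕ → α) (a b : ℕ) :
    (extractInf x a b).length = b + 1 - a := by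
  simp [extractInf]

theorem getElem_extractInf {α : Type*} (x : ℕ → α) {a b k : ℕ}
    (hk : k < (extractInf x a b).length) : (extractInf x a b)[k] = x (a + k) := by
  simp [extractInf]

theorem exists_translate_of_extractInf_isInfix {α : Type*} {x : ℕ → α} {a b c d : ℕ}
    (hac : a ≤ c) (h : extractInf x a b <:+: extractInf x c d) :
    ∃ t, c ≤ a + t ∧ ∀ n, a ≤ n → n ≤ b → x (n + t) = x n := by
  obtain ⟨e, hlen, hget⟩ := List.infix_iff_getElem?.mp h
  refine ⟨c - a + e, by omega, fun n han hnb => ?_⟩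
  have hn : n - a < (extractInf x a b).length := by rw [length_extractInf]; omega
  have hletter := hget (n - a) hn
  rw [List.getElem?_eq_getElem (by omega), Option.some_inj, getElem_extractInf,
    getElem_extractInf] at hletter
  rwa [show c + (n - a + e) = n + (c - a + e) by omega, Nat.add_sub_cancel' han] at hletter

theorem add_notMem_range_of_strictMono_gaps_s12 {s : ℕ → ℕ} (hs : StrictMono s)
    (hgap : StrictMono fun k => s (k + 1) - s k) {k t : ℕ} (ht : 0 < t)
    (hk : s k + t ∈ Set.range s) : s (k + 1) + t ∉ Set.range s := by
  rintro ⟨m, hm⟩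
  obtain ⟨l, hl⟩ := hk
  have hsk : s k < s (k + 1) := hs k.lt_succ_self
  have hkl : k < l := hs.lt_iff_lt.mp (by omega)
  have hlm : l < m := hs.lt_iff_lt.mp (by omega)
  have hgap_lt : s (k + 1) - s k < s (l + 1) - s l := hgap hkl
  have hgap_le : s (l + 1) ≤ s m := hs.monotone hlm
  omega

theorem not_extractInf_isInfix_of_strictMono_gaps {α : Type*} {x : ℕ → α} {u : α} {s : ℕ → ℕ}
    (hx : ∀ n, x n = u ↔ n ∈ Set.range s) (hs : StrictMono s)
    (hgap : StrictMono fun k => s (k + 1) - s k) {a b c d k : ℕ} (hac : a < c)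
    (hak : a ≤ s k) (hkb : s (k + 1) ≤ b) :
    ¬ (extractInf x a b <:+: extractInf x c d) := by
  intro h
  obtain ⟨t, hct, hxt⟩ := exists_translate_of_extractInf_isInfix hac.le h
  have add_mem (l : ℕ) (hal : a ≤ s l) (hlb : s l ≤ b) : s l + t ∈ Set.range s := by
    rw [← hx, hxt _ hal hlb, hx]
    exact Set.mem_range_self l
  have hk : s k < s (k + 1) := hs k.lt_succ_self
  exact add_notMem_range_of_strictMono_gaps_s12 hs hgap (by omega) (add_mem k hak (by omega))
    (add_mem (k + 1) (by omega) hkb)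

theorem exists_consecutive_mem_Icc_two_mul {s : ℕ → ℕ} (hs : StrictMono s)
    (hzero : s 1 ≤ 2 * s 0) (hstep : ∀ k, s (k + 2) ≤ 2 * (s k + 1)) {i : ℕ} (hi : s 0 ≤ i) :
    ∃ k, i ≤ s k ∧ s (k + 1) ≤ 2 * i := by
  rcases hi.eq_or_lt with rfl | hlt
  · exact ⟨0, le_rfl, hzero⟩
  · obtain ⟨k, hki, hik⟩ := hs.exists_between_of_tendsto_atTop hs.tendsto_atTop hlt
    exact ⟨k + 1, hik, (hstep k).trans (Nat.mul_le_mul_left 2 hki)⟩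

/-- The numbers `2, 3, 5, 8, 12, …`: the triangular numbers `k (k + 1) / 2` shifted by `2`, the
least shift for which every interval `[i, 2i]` with `2 ≤ i` contains two consecutive terms. -/
def shiftedTriangular (k : ℕ) : ℕ := (k + 1).choose 2 + 2

theorem shiftedTriangular_succ (k : ℕ) :
    shiftedTriangular (k + 1) = shiftedTriangular k + (k + 1) := by
  have pascal : (k + 2).choose 2 = k + 1 + (k + 1).choose 2 := by
    rw [Nat.choose_succ_succ', Nat.choose_one_right]
  rw [shiftedTriangular, shiftedTriangular, pascal]
  omega

theorem strictMono_shiftedTriangular : StrictMono shiftedTriangular :=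
  strictMono_nat_of_lt_succ fun k => by rw [shiftedTriangular_succ]; omega

theorem strictMono_shiftedTriangular_gaps :
    StrictMono fun k => shiftedTriangular (k + 1) - shiftedTriangular k := by
  simp only [shiftedTriangular_succ, Nat.add_sub_cancel_left]
  exact Order.succ_strictMono

theorem two_mul_add_one_le_shiftedTriangular (k : ℕ) : 2 * k + 1 ≤ shiftedTriangular k := by
  induction k with
  | zero => decide
  | succ k ih =>
    rcases k with _ | k
    · decide
    · rw [shiftedTriangular_succ]
      omega

theorem shiftedTriangular_add_two_le (k : ℕ) :
    shiftedTriangular (k + 2) ≤ 2 * (shiftedTriangular k + 1) := by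
  have := two_mul_add_one_le_shiftedTriangular k
  rw [shiftedTriangular_succ, shiftedTriangular_succ]
  omega

theorem stmt_12_general (α : Type*) [Nontrivial α] :
    ∃ x : ℕ → α, ∀ i j n : ℕ, 2 ≤ i → i < j →
      ¬ (extractInf x i (2 * i) <:+: extractInf x j n) := by
  classical
  obtain ⟨u, v, huv⟩ := exists_pair_ne α
  let x (n : ℕ) : α := if n ∈ Set.range shiftedTriangular then u else v
  have hx (n : ℕ) : x n = u ↔ n ∈ Set.range shiftedTriangular := by
    simp only [x, ite_eq_left_iff, huv.symm, imp_false, not_not]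
  refine ⟨x, fun i j n hi hij => ?_⟩
  obtain ⟨k, hik, hki⟩ := exists_consecutive_mem_Icc_two_mul strictMono_shiftedTriangular
    (by decide) shiftedTriangular_add_two_le hi
  exact not_extractInf_isInfix_of_strictMono_gaps hx strictMono_shiftedTriangular
    strictMono_shiftedTriangular_gaps hij hik hki

theorem stmt_12 :
    ∃ x : ℕ → Fin 2, ∀ i j : ℕ, 2 ≤ i → i < j →
      ¬ (extractInf x i (2 * i) <:+: extractInf x j (2 * j)) :=
  (stmt_12_general (Fin 2)).imp fun _ hx i j => hx i j (2 * j)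
end

section
/- Define g_1 = 3, g_2 = 2, and g_n = 2·g_{n−2} + 1 for n ≥ 3. Let x be the infinite binary word x = 0 0 1 0 0 1^{g_1} 0 1^{g_2} 0 1^{g_3} 0 ⋯ (that is, after the prefix 00100 the word consists of the blocks 1^{g_n} for n = 1, 2, 3, …, each followed by a single 0). Then for every i ≥ 2, the factor x[i..2i] contains exactly two occurrences of the letter 0. -/
/-!
Let `z 0 < z 1 < ⋯` be the positions of the zeros, `1, 2, 4, 5, 9, 12, 20, …`. The recurrence for
the block lengths says that every second position doubles: `z (n + 2)` is `2 * z n + 1` or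
`2 * z n + 2`. If `z n < i ≤ z (n + 1)`, then
`z (n + 2) ≤ 2 * (z n + 1) ≤ 2 * i ≤ 2 * z (n + 1) < z (n + 3)`, so the zeros in the window
`[i, 2 * i]` are exactly those at `z (n + 1)` and `z (n + 2)`.
-/

theorem count_extractInf {α : Type*} [DecidableEq α] (x : ℕ → α) (c : α) (a b : ℕ) :
    (extractInf x a b).count c = (Set.Icc a b ∩ x ⁻¹' {c}).ncard := by
  have hwindow : Set.Icc a b ∩ x ⁻¹' {c} =
      ({k ∈ Finset.range (b + 1 - a) | x (a + k) = c}.map (addLeftEmbedding a) : Finset ℕ) := by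
    ext p
    simp only [Set.mem_inter_iff, Set.mem_Icc, Set.mem_preimage, Set.mem_singleton_iff,
      Finset.coe_map, Finset.coe_filter, Finset.mem_range, Set.mem_image, Set.mem_ofPred_eq,
      addLeftEmbedding_apply]
    constructor
    · rintro ⟨⟨hap, hpb⟩, hp⟩
      exact ⟨p - a, ⟨by omega, by rwa [Nat.add_sub_cancel' hap]⟩, Nat.add_sub_cancel' hap⟩
    · rintro ⟨k, ⟨hk, hxk⟩, rfl⟩
      exact ⟨by omega, hxk⟩
  rw [hwindow, Set.ncard_coe_finset, Finset.card_map, ← Nat.count_eq_card_filter_range,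
    Nat.count, extractInf, List.count, List.countP_map]
  rfl

theorem ncard_Icc_mul_inter_range {z : ℕ → ℕ} (hz : StrictMono z) {q d : ℕ}
    (hlower : ∀ n, q * z n < z (n + d)) (hupper : ∀ n, z (n + d) ≤ q * (z n + 1))
    {i : ℕ} (hi : z 0 < i) : (Set.Icc i (q * i) ∩ Set.range z).ncard = d := by
  obtain ⟨n, hni, hin⟩ := hz.exists_between_of_tendsto_atTop hz.tendsto_atTop hi
  have hlast : z (n + d) ≤ q * i := (hupper n).trans (Nat.mul_le_mul_left q hni)
  have hnext : q * i < z (n + 1 + d) := (Nat.mul_le_mul_left q hin).trans_lt (hlower (n + 1))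
  have hwindow : Set.Icc i (q * i) ∩ Set.range z = z '' Set.Ico (n + 1) (n + 1 + d) := by
    ext p
    constructor
    · rintro ⟨⟨hip, hpi⟩, m, rfl⟩
      exact ⟨m, ⟨hz.lt_iff_lt.1 (hni.trans_le hip), hz.lt_iff_lt.1 (hpi.trans_lt hnext)⟩, rfl⟩
    · rintro ⟨m, ⟨hnm, hmd⟩, rfl⟩
      exact ⟨⟨hin.trans (hz.monotone hnm), (hz.monotone (by omega)).trans hlast⟩, m, rfl⟩
  rw [hwindow, Set.ncard_image_of_injective _ hz.injective, Set.ncard_Ico_nat,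
    Nat.add_sub_cancel_left]

/-- The increasing enumeration of the positions of the zeros of the 1-indexed word
`00100 1^{g 1} 0 1^{g 2} 0 ⋯`. The index `k + 3` is that of the zero just after the first `k`
blocks, so that `k = 0` gives the last letter of the prefix. -/
def zeroPosition (g : ℕ → ℕ) : ℕ → ℕ
  | 0 => 1
  | 1 => 2
  | 2 => 4
  | k + 3 => 5 + ∑ m ∈ Finset.Icc 1 k, (g m + 1)

theorem mem_range_zeroPosition {g : ℕ → ℕ} {p : ℕ} :
    p ∈ Set.range (zeroPosition g) ↔ p = 1 ∨ p = 2 ∨ p = 4 ∨ p = 5 ∨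
      ∃ k : ℕ, 1 ≤ k ∧ p = 5 + ∑ m ∈ Finset.Icc 1 k, (g m + 1) := by
  constructor
  · rintro ⟨_ | _ | _ | _ | k, rfl⟩
    iterate 4 simp [zeroPosition]
    exact .inr <| .inr <| .inr <| .inr ⟨k + 1, by omega, rfl⟩
  · rintro (rfl | rfl | rfl | rfl | ⟨k, -, rfl⟩)
    exacts [⟨0, rfl⟩, ⟨1, rfl⟩, ⟨2, rfl⟩, ⟨3, rfl⟩, ⟨k + 3, rfl⟩]

theorem zeroPosition_add_four (g : ℕ → ℕ) (k : ℕ) :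
    zeroPosition g (k + 4) = zeroPosition g (k + 3) + (g (k + 1) + 1) := by
  simp only [zeroPosition, Finset.sum_Icc_succ_top (Nat.le_add_left 1 k), add_assoc]

theorem strictMono_zeroPosition (g : ℕ → ℕ) : StrictMono (zeroPosition g) := by
  refine strictMono_nat_of_lt_succ ?_
  rintro (_ | _ | _ | k)
  iterate 3 simp [zeroPosition]
  simp [zeroPosition_add_four]

section Recurrence

variable {g : ℕ → ℕ} (hg1 : g 1 = 3) (hg2 : g 2 = 2)
  (hgrec : ∀ n : ℕ, 1 ≤ n → g (n + 2) = 2 * g n + 1)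
include hg1 hg2 hgrec

theorem zeroPosition_add_five (k : ℕ) :
    zeroPosition g (k + 5) = 2 * zeroPosition g (k + 3) + 2 := by
  induction k with
  | zero => simp [zeroPosition, Finset.sum_Icc_succ_top, hg1, hg2]
  | succ k ih =>
    have hblock : g (k + 3) = 2 * g (k + 1) + 1 := hgrec (k + 1) (Nat.le_add_left 1 k)
    calc zeroPosition g (k + 6)
      _ = zeroPosition g (k + 5) + (g (k + 3) + 1) := zeroPosition_add_four g (k + 2)
      _ = 2 * (zeroPosition g (k + 3) + (g (k + 1) + 1)) + 2 := by rw [ih, hblock]; ring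
      _ = 2 * zeroPosition g (k + 4) + 2 := by rw [zeroPosition_add_four]

theorem zeroPosition_add_two_mem_Ioc (n : ℕ) :
    zeroPosition g (n + 2) ∈ Set.Ioc (2 * zeroPosition g n) (2 * (zeroPosition g n + 1)) := by
  obtain _ | _ | _ | k := n
  iterate 3 simp [zeroPosition, hg1]
  have hrec := zeroPosition_add_five hg1 hg2 hgrec k
  simp only [Set.mem_Ioc, add_assoc, Nat.reduceAdd]
  omega

end Recurrence

theorem stmt_14_general {α : Type*} [DecidableEq α] (g : ℕ → ℕ) (x : ℕ → α) (c : α)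
    (hg1 : g 1 = 3) (hg2 : g 2 = 2)
    (hgrec : ∀ n : ℕ, 1 ≤ n → g (n + 2) = 2 * g n + 1)
    (hx : ∀ p : ℕ, 1 ≤ p →
      (x p = c ↔ (p = 1 ∨ p = 2 ∨ p = 4 ∨ p = 5 ∨
        ∃ k : ℕ, 1 ≤ k ∧ p = 5 + ∑ m ∈ Finset.Icc 1 k, (g m + 1)))) :
    ∀ i : ℕ, 2 ≤ i → (extractInf x i (2 * i)).count c = 2 := by
  intro i hi
  have hdouble := zeroPosition_add_two_mem_Ioc hg1 hg2 hgrec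
  have hwindow : Set.Icc i (2 * i) ∩ x ⁻¹' {c} =
      Set.Icc i (2 * i) ∩ Set.range (zeroPosition g) := by
    ext p
    refine and_congr_right fun hp => ?_
    exact (hx p (one_le_two.trans (hi.trans hp.1))).trans mem_range_zeroPosition.symm
  rw [count_extractInf, hwindow]
  exact ncard_Icc_mul_inter_range (strictMono_zeroPosition g) (fun n => (hdouble n).1)
    (fun n => (hdouble n).2) hi

theorem stmt_14 (g : ℕ → ℕ) (x : ℕ → Fin 2)
    (hg1 : g 1 = 3) (hg2 : g 2 = 2)
    (hgrec : ∀ n : ℕ, 1 ≤ n → g (n + 2) = 2 * g n + 1)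
    -- `x = 00100 1^{g 1} 0 1^{g 2} 0 1^{g 3} 0 ⋯` (1-indexed): the letter at
    -- position `p ≥ 1` is `0` exactly when `p ∈ {1,2,4,5}` or `p` is the position
    -- `5 + ∑_{m=1}^{k} (g m + 1)` of the `0` following the block `1^{g k}`.
    (hx : ∀ p : ℕ, 1 ≤ p →
      (x p = 0 ↔ (p = 1 ∨ p = 2 ∨ p = 4 ∨ p = 5 ∨
        ∃ k : ℕ, 1 ≤ k ∧ p = 5 + ∑ m ∈ Finset.Icc 1 k, (g m + 1)))) :
    ∀ i : ℕ, 2 ≤ i → (extractInf x i (2 * i)).count (0 : Fin 2) = 2 :=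
  stmt_14_general g x 0 hg1 hg2 hgrec hx
end
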